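/- Let p be an odd prime, F/ℚ_p a finite unramified extension, and a₁, ..., a_n ∈ 𝒪_F \ 𝒪_F^p satisfying the Kummer independence condition [a_i]_F ∉ ⟨[a₁]_F, ..., [a_{i−1}]_F⟩ in F*/(F*)^p for all i ≥ 2. Then for all integers r ≥ 1 and s₁, ..., s_n ≥ 0, the extension F(ζ_{p^r}, a₁^{1/p^{s₁}}, ..., a_n^{1/p^{s_n}})/F is totally ramified. -/

import Mathlib

/-- The `ℤ_[p]`-algebra structure on a field `L` over `ℚ_[p]`. -/
noncomputable def padicIntAlgebra (p : ℕ) [Fact p.Prime] (L : Type*) [Field L]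
    [Algebra ℚ_[p] L] : Algebra ℤ_[p] L :=
  ((algebraMap ℚ_[p] L).comp (algebraMap ℤ_[p] ℚ_[p])).toAlgebra

/-- The ring of integers of a `p`-adic field `L`, i.e. the integral closure of `ℤ_[p]` in `L`. -/
noncomputable def ringOfInt (p : ℕ) [Fact p.Prime] (L : Type*) [Field L]
    [Algebra ℚ_[p] L] : Subring L :=
  letI := padicIntAlgebra p L
  (integralClosure ℤ_[p] L).toSubring

/-- The maximal ideal of the ring of integers of `L` (its Jacobson radical). -/
noncomputable def maxIdeal (p : ℕ) [Fact p.Prime] (L : Type*) [Field L]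
    [Algebra ℚ_[p] L] : Ideal (ringOfInt p L) :=
  (⊥ : Ideal (ringOfInt p L)).jacobson

/-- The `i`-th ramification group (in lower numbering) of `L/K`, as a subset of `Gal(L/K)`:
`σ ∈ G_i` iff `σ x - x ∈ 𝔭_L ^ (i+1)` for every `x` in the ring of integers of `L`. -/
noncomputable def ramSet (p : ℕ) [Fact p.Prime] (K L : Type*) [Field K] [Field L]
    [Algebra ℚ_[p] L] [Algebra K L] (i : ℕ) : Set (L ≃ₐ[K] L) :=
  {σ | ∀ x : ringOfInt p L, ∃ y ∈ maxIdeal p L ^ (i + 1), (y : L) = σ (x : L) - (x : L)}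

/-- `t` is a ramification jump of `L/K` if `G_t ≠ G_{t+1}`. -/
noncomputable def IsRamJump (p : ℕ) [Fact p.Prime] (K L : Type*) [Field K] [Field L]
    [Algebra ℚ_[p] L] [Algebra K L] (t : ℕ) : Prop :=
  ramSet p K L t ≠ ramSet p K L (t + 1)

/-- `L/K` has a unique ramification jump, equal to `t`. -/
noncomputable def HasUniqueRamJump (p : ℕ) [Fact p.Prime] (K L : Type*) [Field K] [Field L]
    [Algebra ℚ_[p] L] [Algebra K L] (t : ℕ) : Prop :=
  IsRamJump p K L t ∧ ∀ t', IsRamJump p K L t' → t' = t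

/-- Same as `HasUniqueRamJump`, with the `K`-algebra structure on `L` given by an
explicit ring homomorphism. -/
noncomputable def HasUniqueRamJumpHom (p : ℕ) [Fact p.Prime] (K L : Type*) [Field K] [Field L]
    [Algebra ℚ_[p] L] (f : K →+* L) (t : ℕ) : Prop :=
  letI := f.toAlgebra
  HasUniqueRamJump p K L t

/-- The absolute ramification index `e(L|ℚ_p)`, i.e. the valuation of `p` in `L`. -/
noncomputable def eAbs (p : ℕ) [Fact p.Prime] (L : Type*) [Field L] [Algebra ℚ_[p] L] : ℕ :=
  sSup {n : ℕ | Ideal.span {(p : ringOfInt p L)} ≤ maxIdeal p L ^ n}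

/-- The normalized valuation `v_L(x)` of an integral element `x` of `L`. -/
noncomputable def valInt (p : ℕ) [Fact p.Prime] (L : Type*) [Field L] [Algebra ℚ_[p] L]
    (x : L) : ℕ :=
  sSup {n : ℕ | ∃ y ∈ maxIdeal p L ^ n, (y : L) = x}

/-!
A primitive root of unity of order `p ^ g - 1` lies in a `p`-adic field `L` if and only if `g`
divides the residue degree `f(L|ℚ_p)`, so `L/F` is totally ramified as soon as `L` has no more such
roots of unity than `F`. For `L = F(ζ)` with `ζ` of order `q = p ^ m`, total ramification follows
from `p = ∏ (1 - μ)`, the product over the primitive `q`-th roots of unity `μ`: as `F` is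
unramified, it forces `φ(q) ≤ e(L|ℚ_p) ≤ [L : F] ≤ φ(q)`. In particular some automorphism `σ` over
`F` inverts `ζ`.

Let now `τ` fix `F(ζ)`. Then `τ x = ζ ^ k * x` for every `q`-th root `x` of an element of `F`, hence
`τ σ τ = σ` and `τ ^ q = 1` on the field generated by these `x`. The action on a root of unity `ξ`
of that field factors through a commutative group, so it sends `τ` to an element killed by `2` and
by the odd number `q`. Therefore `τ ξ = ξ`, and `ξ` already lies in `F(ζ)`.
-/

open IsLocalRing Polynomial IntermediateField

section LocalRings

theorem isAdicComplete_of_compactSpace {R : Type*} [CommRing R] [TopologicalSpace R]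
    [IsTopologicalRing R] [T2Space R] [CompactSpace R] [IsNoetherianRing R] (I : Ideal R)
    [IsHausdorff I R] : IsAdicComplete I R where
  prec' f hf := by
    let coset (n : ℕ) : Set R := {x | x - f n ∈ I ^ n}
    have hclosed (n : ℕ) : IsClosed (coset n) :=
      (IsNoetherianRing.isClosed_ideal (I ^ n)).preimage (continuous_sub_right (f n))
    have hanti (n : ℕ) : coset (n + 1) ⊆ coset n := fun x (hx : x - f (n + 1) ∈ I ^ (n + 1)) => by
      have hcauchy : f n - f (n + 1) ∈ I ^ n := by simpa [SModEq.sub_mem] using hf n.le_succ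
      simpa [coset] using sub_mem (Ideal.pow_le_pow_right n.le_succ hx) hcauchy
    obtain ⟨x, hx⟩ := (hclosed 0).isCompact.nonempty_iInter_of_sequence_nonempty_isCompact_isClosed
      coset hanti (fun n => ⟨f n, by simp [coset]⟩) hclosed
    refine ⟨x, fun n => SModEq.symm ?_⟩
    have hxn : x - f n ∈ I ^ n := Set.mem_iInter.1 hx n
    simpa [SModEq.sub_mem] using hxn

variable {S : Type*} [CommRing S]

instance henselianLocalRing_of_isAdicComplete [IsLocalRing S] [IsAdicComplete (maximalIdeal S) S] :
    HenselianLocalRing S where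
  is_henselian f hf a₀ h h' := HenselianRing.is_henselian f hf a₀ h (h'.map _)

theorem exists_isPrimitiveRoot_of_residueField [HenselianLocalRing S] {n : ℕ}
    (hn : (n : ResidueField S) ≠ 0) {η : ResidueField S} (hη : IsPrimitiveRoot η n) :
    ∃ ξ : S, IsPrimitiveRoot ξ n := by
  have hn0 : n ≠ 0 := by rintro rfl; simp at hn
  have hensel := ((HenselianLocalRing.TFAE S).out 0 1 :).1 ‹_›
  obtain ⟨ξ, hroot, hres⟩ := hensel (X ^ n - 1) (monic_X_pow_sub_C 1 hn0) η
    (by simp [hη.pow_eq_one])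
    (by simp [derivative_X_pow, hn, hη.ne_zero hn0])
  refine ⟨ξ, by simpa [sub_eq_zero] using hroot, fun l hl => hη.dvd_of_pow_eq_one l ?_⟩
  rw [← hres, ← map_pow, hl, map_one]

theorem exists_isPrimitiveRoot_card_sub_one (k : Type*) [Field k] [Finite k] :
    ∃ η : k, IsPrimitiveRoot η (Nat.card k - 1) := by
  obtain ⟨g, hg⟩ := IsCyclic.exists_generator (α := kˣ)
  refine ⟨g, ?_⟩
  rw [IsPrimitiveRoot.coe_units_iff, ← Nat.card_units, ← orderOf_eq_card_of_forall_mem_zpowers hg]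
  exact IsPrimitiveRoot.orderOf g

theorem natCast_pow_sub_one_ne_zero {R : Type*} [Ring R] [Nontrivial R] (p : ℕ) [NeZero p]
    [CharP R p] {g : ℕ} (hg : g ≠ 0) : ((p ^ g - 1 : ℕ) : R) ≠ 0 := by
  simp [Nat.cast_sub (Nat.one_le_pow _ _ (NeZero.pos p)), hg]

theorem dvd_card_residueField_sub_one [IsDomain S] [IsLocalRing S] [Finite (ResidueField S)] {n : ℕ}
    (hn : (n : ResidueField S) ≠ 0) {ξ : S} (hξ : IsPrimitiveRoot ξ n) :
    n ∣ Nat.card (ResidueField S) - 1 := by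
  have := Fintype.ofFinite (ResidueField S)
  have : NeZero (n : ResidueField S) := ⟨hn⟩
  have hn0 : 0 < n := Nat.pos_of_ne_zero (by rintro rfl; simp at hn)
  have hres : IsPrimitiveRoot (residue S ξ) n := by
    rw [← isRoot_cyclotomic_iff, ← map_cyclotomic n (residue S)]
    exact (hξ.isRoot_cyclotomic hn0).map
  rw [Nat.card_eq_fintype_card]
  exact hres.dvd_of_pow_eq_one _ (FiniteField.pow_card_sub_one_eq_one _ (hres.ne_zero hn0.ne'))

end LocalRings

section RingOfIntegers

variable (p : ℕ) [Fact p.Prime] (L : Type*) [Field L] [Algebra ℚ_[p] L]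

noncomputable local instance padicIntAlgebra_instance : Algebra ℤ_[p] L := padicIntAlgebra p L

local instance isScalarTower_padicInt : IsScalarTower ℤ_[p] ℚ_[p] L :=
  IsScalarTower.of_algebraMap_eq fun _ => rfl

noncomputable instance algebraRingOfInt : Algebra ℤ_[p] (ringOfInt p L) :=
  inferInstanceAs (Algebra ℤ_[p] (integralClosure ℤ_[p] L))

local instance isIntegralClosure_ringOfInt : IsIntegralClosure (ringOfInt p L) ℤ_[p] L :=
  inferInstanceAs (IsIntegralClosure (integralClosure ℤ_[p] L) ℤ_[p] L)

local instance isScalarTower_ringOfInt : IsScalarTower ℤ_[p] (ringOfInt p L) L :=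
  IsScalarTower.of_algebraMap_eq fun _ => rfl

instance isTorsionFree_ringOfInt : Module.IsTorsionFree ℤ_[p] (ringOfInt p L) :=
  have : Module.IsTorsionFree ℤ_[p] L := Module.IsTorsionFree.trans_faithfulSMul ℤ_[p] ℚ_[p] L
  IsIntegralClosure.isTorsionFree ℤ_[p] L

instance charZero_ringOfInt : CharZero (ringOfInt p L) :=
  charZero_of_injective_algebraMap (FaithfulSMul.algebraMap_injective ℤ_[p] (ringOfInt p L))

variable {L} in
theorem exists_ringOfInt_isPrimitiveRoot {n : ℕ} (hn : n ≠ 0) {ξ : L} (hξ : IsPrimitiveRoot ξ n) :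
    ∃ ξ' : ringOfInt p L, IsPrimitiveRoot ξ' n := by
  have hint : IsIntegral ℤ_[p] ξ := (hξ.isIntegral (Nat.pos_of_ne_zero hn)).tower_top
  exact ⟨⟨ξ, hint⟩, hξ.of_map_of_injective (f := (ringOfInt p L).subtype) Subtype.val_injective⟩

variable [FiniteDimensional ℚ_[p] L]

instance moduleFinite_ringOfInt : Module.Finite ℤ_[p] (ringOfInt p L) :=
  IsIntegralClosure.finite ℤ_[p] ℚ_[p] L (ringOfInt p L)

instance isDedekindDomain_ringOfInt : IsDedekindDomain (ringOfInt p L) :=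
  integralClosure.isDedekindDomain ℤ_[p] ℚ_[p] L

variable {L} in
theorem mem_ringOfInt_iff_spectralNorm_le_one (x : L) :
    x ∈ ringOfInt p L ↔ spectralNorm ℚ_[p] L x ≤ 1 := by
  have hx : IsIntegral ℚ_[p] x := Algebra.IsIntegral.isIntegral x
  change IsIntegral ℤ_[p] x ↔ spectralValue (minpoly ℚ_[p] x) ≤ 1
  rw [spectralValue_le_one_iff (minpoly.monic hx)]
  constructor
  · intro h n
    rw [minpoly.isIntegrallyClosed_eq_field_fractions' ℚ_[p] h, coeff_map]
    exact ((minpoly ℤ_[p] x).coeff n).2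
  · intro h
    have hlifts : minpoly ℚ_[p] x ∈ lifts (algebraMap ℤ_[p] ℚ_[p]) := by
      rw [lifts_iff_coeff_lifts]
      exact fun n => ⟨⟨_, h n⟩, rfl⟩
    obtain ⟨q, hq, -, hmonic⟩ := lifts_and_degree_eq_and_monic hlifts (minpoly.monic hx)
    refine ⟨q, hmonic, ?_⟩
    have hroot := minpoly.aeval ℚ_[p] x
    rwa [← hq, aeval_map_algebraMap] at hroot

theorem mem_ringOfInt_or_inv_mem (x : L) : x ∈ ringOfInt p L ∨ x⁻¹ ∈ ringOfInt p L := by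
  let := spectralNorm.normedField ℚ_[p] L
  simp only [mem_ringOfInt_iff_spectralNorm_le_one]
  change ‖x‖ ≤ 1 ∨ ‖x⁻¹‖ ≤ 1
  rw [norm_inv]
  exact (le_total ‖x‖ 1).imp_right inv_le_one_of_one_le₀

instance isLocalRing_ringOfInt : IsLocalRing (ringOfInt p L) :=
  inferInstanceAs (IsLocalRing
    (ValuationSubring.ofSubring (ringOfInt p L) (mem_ringOfInt_or_inv_mem p L)))

theorem maxIdeal_eq_maximalIdeal : maxIdeal p L = maximalIdeal (ringOfInt p L) :=
  jacobson_eq_maximalIdeal ⊥ bot_ne_top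

instance isAdicComplete_ringOfInt :
    IsAdicComplete (maximalIdeal (ringOfInt p L)) (ringOfInt p L) := by
  let := spectralNorm.nontriviallyNormedField ℚ_[p] L
  let := spectralNorm.normedSpace ℚ_[p] L
  have : ProperSpace L := FiniteDimensional.proper ℚ_[p] L
  have hball : (ringOfInt p L : Set L) = Metric.closedBall 0 1 := by
    ext x
    rw [SetLike.mem_coe, mem_ringOfInt_iff_spectralNorm_le_one, mem_closedBall_zero_iff]
    rfl
  have : CompactSpace (ringOfInt p L) :=
    isCompact_iff_compactSpace.1 (hball ▸ isCompact_closedBall (0 : L) 1)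
  have : IsHausdorff (maximalIdeal (ringOfInt p L)) (ringOfInt p L) :=
    .of_le_jacobson _ _ (maximalIdeal_le_jacobson ⊥)
  exact isAdicComplete_of_compactSpace _

theorem finrank_ringOfInt :
    Module.finrank ℤ_[p] (ringOfInt p L) = Module.finrank ℚ_[p] L :=
  have : Module.IsTorsionFree ℤ_[p] L := Module.IsTorsionFree.trans_faithfulSMul ℤ_[p] ℚ_[p] L
  IsIntegralClosure.rank ℤ_[p] ℚ_[p] L (ringOfInt p L)

end RingOfIntegers

section ResidueDegree

theorem ramificationIdx_mul_inertiaDeg_maximalIdeal {R S : Type*} [CommRing R] [IsDomain R]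
    [CommRing S] [IsDedekindDomain S] [IsLocalRing S] [Algebra R S] [FaithfulSMul R S]
    [Module.Finite R S] [Module.Flat R S] {P : Ideal R} [P.IsMaximal] (hP : P ≠ ⊥) :
    (maximalIdeal S).ramificationIdx R * (maximalIdeal S).inertiaDeg R = Module.finrank R S := by
  have hover : P.primesOver S = {maximalIdeal S} := primesOver_eq S hP
  have : Fintype (P.primesOver S) := hover ▸ Set.fintypeSingleton _
  have : Subsingleton (P.primesOver S) := hover ▸ inferInstance
  rw [← Ideal.sum_ramification_inertia_eq_finrank P S,
    Fintype.sum_subsingleton _ ⟨maximalIdeal S, hover ▸ rfl⟩]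

/-- The residue degree `f(L|ℚ_p)` of a finite extension `L` of `ℚ_[p]`, through which total
ramification is detected. Like `eAbs`, it is defined on `maxIdeal`, so that it makes sense before
`ringOfInt p L` is known to be local. -/
noncomputable def residueDegree (p : ℕ) [Fact p.Prime] (L : Type*) [Field L] [Algebra ℚ_[p] L] :
    ℕ :=
  (maxIdeal p L).inertiaDeg ℤ_[p]

variable (p : ℕ) [Fact p.Prime] (L : Type*) [Field L] [Algebra ℚ_[p] L]
  [FiniteDimensional ℚ_[p] L]

theorem natCast_mem_maxIdeal : (p : ringOfInt p L) ∈ maxIdeal p L := by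
  rw [maxIdeal_eq_maximalIdeal, ← map_natCast (algebraMap ℤ_[p] (ringOfInt p L)),
    ← Ideal.mem_of_liesOver _ (maximalIdeal ℤ_[p]), PadicInt.maximalIdeal_eq_span_p]
  exact Ideal.mem_span_singleton_self _

instance charP_residueField_ringOfInt : CharP (ResidueField (ringOfInt p L)) p := by
  rw [CharP.charP_iff_prime_eq_zero Fact.out, ← map_natCast (residue (ringOfInt p L)),
    residue_eq_zero_iff, ← maxIdeal_eq_maximalIdeal]
  exact natCast_mem_maxIdeal p L

theorem card_residueField_ringOfInt :
    Nat.card (ResidueField (ringOfInt p L)) = p ^ residueDegree p L := by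
  have hcard : (maximalIdeal ℤ_[p]).cardQuot = p :=
    (Nat.card_congr PadicInt.residueField.toEquiv).trans (Nat.card_zmod p)
  rw [residueDegree, maxIdeal_eq_maximalIdeal]
  have hpow := Ideal.cardQuot_pow_inertiaDeg (maximalIdeal ℤ_[p]) (maximalIdeal (ringOfInt p L))
  rw [hcard] at hpow
  exact hpow.symm

instance finite_residueField_ringOfInt : Finite (ResidueField (ringOfInt p L)) :=
  Nat.finite_of_card_ne_zero <| card_residueField_ringOfInt p L ▸ pow_ne_zero _ (NeZero.ne p)

theorem residueDegree_pos : 0 < residueDegree p L := by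
  rw [residueDegree, maxIdeal_eq_maximalIdeal]
  exact Ideal.inertiaDeg_pos _ _

theorem eAbs_mul_residueDegree : eAbs p L * residueDegree p L = Module.finrank ℚ_[p] L := by
  have hne : maximalIdeal ℤ_[p] ≠ ⊥ := IsDiscreteValuationRing.not_a_field ℤ_[p]
  have heAbs : eAbs p L = (maximalIdeal (ringOfInt p L)).ramificationIdx ℤ_[p] := by
    rw [eAbs, maxIdeal_eq_maximalIdeal, ← Ideal.ramificationIdx'_eq_ramificationIdx _ _ hne,
      Ideal.ramificationIdx', PadicInt.maximalIdeal_eq_span_p, Ideal.map_span, Set.image_singleton,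
      map_natCast]
  rw [heAbs, residueDegree, maxIdeal_eq_maximalIdeal,
    ramificationIdx_mul_inertiaDeg_maximalIdeal hne, finrank_ringOfInt]

theorem eAbs_pos : 0 < eAbs p L := by
  have hpos : 0 < Module.finrank ℚ_[p] L := Module.finrank_pos
  rw [← eAbs_mul_residueDegree] at hpos
  exact Nat.pos_of_mul_pos_right hpos

theorem exists_isPrimitiveRoot_residueDegree :
    ∃ ξ : L, IsPrimitiveRoot ξ (p ^ residueDegree p L - 1) := by
  obtain ⟨η, hη⟩ := exists_isPrimitiveRoot_card_sub_one (ResidueField (ringOfInt p L))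
  rw [card_residueField_ringOfInt] at hη
  obtain ⟨ξ, hξ⟩ := exists_isPrimitiveRoot_of_residueField
    (natCast_pow_sub_one_ne_zero p (residueDegree_pos p L).ne') hη
  exact ⟨ξ, hξ.map_of_injective (f := (ringOfInt p L).subtype) Subtype.val_injective⟩

variable {L}

theorem le_residueDegree {g : ℕ} {ξ : L} (hξ : IsPrimitiveRoot ξ (p ^ g - 1)) :
    g ≤ residueDegree p L := by
  have hp1 : 1 < p := (Fact.out : p.Prime).one_lt
  obtain rfl | hg := eq_or_ne g 0
  · exact Nat.zero_le _
  obtain ⟨ξ', hξ'⟩ := exists_ringOfInt_isPrimitiveRoot p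
    (Nat.sub_pos_of_lt (Nat.one_lt_pow hg hp1)).ne' hξ
  have hdvd := dvd_card_residueField_sub_one (natCast_pow_sub_one_ne_zero p hg) hξ'
  rw [card_residueField_ringOfInt] at hdvd
  have hf := Nat.one_lt_pow (residueDegree_pos p L).ne' hp1
  have hle := Nat.le_of_dvd (Nat.sub_pos_of_lt hf) hdvd
  exact (Nat.pow_le_pow_iff_right hp1).1 (by lia)

theorem residueDegree_le_of_ringHom {F : Type*} [Field F] [Algebra ℚ_[p] F]
    [FiniteDimensional ℚ_[p] F] (f : F →+* L) : residueDegree p F ≤ residueDegree p L := by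
  obtain ⟨ξ, hξ⟩ := exists_isPrimitiveRoot_residueDegree p F
  exact le_residueDegree p (hξ.map_of_injective f.injective)

theorem le_eAbs {n : ℕ} (h : (p : ringOfInt p L) ∈ maxIdeal p L ^ n) : n ≤ eAbs p L := by
  refine le_csSup ?_ ((Ideal.span_singleton_le_iff_mem _).2 h)
  by_contra hunbdd
  exact (eAbs_pos p L).ne' (Nat.sSup_of_not_bddAbove hunbdd)

theorem eAbs_eq_one (hunram : maxIdeal p L = Ideal.span {(p : ringOfInt p L)}) :
    eAbs p L = 1 := by
  have hbot : maxIdeal p L ≠ ⊥ := by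
    rw [hunram, Ne, Ideal.span_singleton_eq_bot]
    exact NeZero.ne _
  have htop : maxIdeal p L ≠ ⊤ := maxIdeal_eq_maximalIdeal p L ▸ Ideal.IsPrime.ne_top'
  have hset : {n : ℕ | maxIdeal p L ≤ maxIdeal p L ^ n} = Set.Iic 1 := by
    ext n
    simpa using (Ideal.pow_right_strictAnti _ hbot htop).le_iff_ge (a := 1) (b := n)
  rw [eAbs, ← hunram, hset, csSup_Iic]

theorem one_sub_mem_maxIdeal {n : ℕ} {μ : ringOfInt p L} (hμ : μ ^ p ^ n = 1) :
    1 - μ ∈ maxIdeal p L := by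
  rw [maxIdeal_eq_maximalIdeal, ← residue_eq_zero_iff]
  refine eq_zero_of_pow_eq_zero (n := p ^ n) ?_
  rw [map_sub, map_one, sub_pow_char_pow, ← map_pow, hμ, map_one, one_pow, sub_self]

theorem totient_le_eAbs {m : ℕ} (hm : m ≠ 0) {ζ : L} (hζ : IsPrimitiveRoot ζ (p ^ m)) :
    (p ^ m).totient ≤ eAbs p L := by
  have hpos : 0 < p ^ m := pow_pos (NeZero.pos p) m
  obtain ⟨ζ', hζ'⟩ := exists_ringOfInt_isPrimitiveRoot p hpos.ne' hζ
  have hprod : (p : ringOfInt p L) = ∏ μ ∈ primitiveRoots (p ^ m) (ringOfInt p L), (1 - μ) := by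
    obtain ⟨k, rfl⟩ := Nat.exists_eq_succ_of_ne_zero hm
    simpa [eval_prod] using congrArg (eval 1) (cyclotomic_eq_prod_X_sub_primitiveRoots hζ')
  refine le_eAbs p ?_
  rw [hprod, ← hζ'.card_primitiveRoots, ← Finset.prod_const]
  exact Ideal.prod_mem_prod fun μ hμ =>
    one_sub_mem_maxIdeal p ((mem_primitiveRoots hpos).1 hμ).pow_eq_one

end ResidueDegree

section Tower

variable (p : ℕ) [Fact p.Prime] (F L : Type*) [Field F] [Field L] [Algebra ℚ_[p] F]
  [Algebra ℚ_[p] L] [Algebra F L] [IsScalarTower ℚ_[p] F L] [FiniteDimensional ℚ_[p] F]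
  [FiniteDimensional F L]

theorem eAbs_mul_residueDegree_eq_finrank_mul :
    eAbs p L * residueDegree p L = Module.finrank F L * (eAbs p F * residueDegree p F) := by
  have : FiniteDimensional ℚ_[p] L := .trans ℚ_[p] F L
  rw [eAbs_mul_residueDegree, eAbs_mul_residueDegree, mul_comm, Module.finrank_mul_finrank]

theorem eAbs_le_finrank_mul : eAbs p L ≤ Module.finrank F L * eAbs p F := by
  have : FiniteDimensional ℚ_[p] L := .trans ℚ_[p] F L
  refine Nat.le_of_mul_le_mul_right ?_ (residueDegree_pos p F)
  calc eAbs p L * residueDegree p F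
      ≤ eAbs p L * residueDegree p L :=
        Nat.mul_le_mul_left _ (residueDegree_le_of_ringHom p (algebraMap F L))
    _ = Module.finrank F L * eAbs p F * residueDegree p F := by
        rw [eAbs_mul_residueDegree_eq_finrank_mul p F L, mul_assoc]

theorem eAbs_eq_finrank_mul_iff :
    eAbs p L = Module.finrank F L * eAbs p F ↔ residueDegree p L = residueDegree p F := by
  have : FiniteDimensional ℚ_[p] L := .trans ℚ_[p] F L
  have htower := eAbs_mul_residueDegree_eq_finrank_mul p F L
  rw [← mul_assoc] at htower
  refine ⟨fun he => ?_, fun hf => ?_⟩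
  · rw [← he] at htower
    exact Nat.eq_of_mul_eq_mul_left (eAbs_pos p L) htower
  · rw [hf] at htower
    exact Nat.eq_of_mul_eq_mul_right (residueDegree_pos p F) htower

end Tower

section Cyclotomic

variable {F C : Type*} [Field F] [Field C] [Algebra F C] {n : ℕ} {ζ : C}

theorem aeval_cyclotomic_eq_zero (hn : n ≠ 0) (hζ : IsPrimitiveRoot ζ n) :
    aeval ζ (cyclotomic n F) = 0 := by
  rw [aeval_def, ← eval_map, map_cyclotomic]
  exact hζ.isRoot_cyclotomic (Nat.pos_of_ne_zero hn)

theorem finiteDimensional_adjoin_primitiveRoot (hn : n ≠ 0) (hζ : IsPrimitiveRoot ζ n) :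
    FiniteDimensional F F⟮ζ⟯ :=
  adjoin.finiteDimensional (hζ.isIntegral (Nat.pos_of_ne_zero hn)).tower_top

theorem finrank_adjoin_le_totient (hn : n ≠ 0) (hζ : IsPrimitiveRoot ζ n) :
    Module.finrank F F⟮ζ⟯ ≤ n.totient := by
  have hint : IsIntegral F ζ := (hζ.isIntegral (Nat.pos_of_ne_zero hn)).tower_top
  rw [adjoin.finrank hint, ← natDegree_cyclotomic n F]
  exact natDegree_le_of_dvd (minpoly.dvd F ζ (aeval_cyclotomic_eq_zero hn hζ))
    (cyclotomic_ne_zero n F)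

theorem exists_algEquiv_apply_eq_inv [Normal F C] (hn : n ≠ 0) (hζ : IsPrimitiveRoot ζ n)
    (hdeg : Module.finrank F F⟮ζ⟯ = n.totient) : ∃ σ : C ≃ₐ[F] C, σ ζ = ζ⁻¹ := by
  have hint : IsIntegral F ζ := (hζ.isIntegral (Nat.pos_of_ne_zero hn)).tower_top
  have hmin : cyclotomic n F = minpoly F ζ := by
    refine eq_of_monic_of_dvd_of_natDegree_le (minpoly.monic hint) (cyclotomic.monic n F)
      (minpoly.dvd F ζ (aeval_cyclotomic_eq_zero hn hζ)) ?_
    rw [natDegree_cyclotomic, ← hdeg, adjoin.finrank hint]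
  exact minpoly.exists_algEquiv_of_root' hint.isAlgebraic
    (hmin ▸ aeval_cyclotomic_eq_zero hn hζ.inv)

theorem autToPow_eq_iff [NeZero n] (hζ : IsPrimitiveRoot ζ n) {σ τ : C ≃ₐ[F] C} :
    hζ.autToPow F σ = hζ.autToPow F τ ↔ σ ζ = τ ζ := by
  refine ⟨fun h => by rw [← hζ.autToPow_spec F σ, h, hζ.autToPow_spec F τ], fun h => ?_⟩
  refine Units.ext (ZMod.val_injective n (hζ.pow_inj (ZMod.val_lt _) (ZMod.val_lt _) ?_))
  rw [hζ.autToPow_spec F σ, hζ.autToPow_spec F τ, h]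

end Cyclotomic

section RootField

/-- The subfield of `C` generated over `F` by the `q`-th roots of all elements of `F`: the
maximal extension of `F` inside `C` obtained by adjoining `q`-th roots. The `q`-th roots of unity
are not assumed to lie in `F`. -/
def rootField (q : ℕ) (F C : Type*) [Field F] [Field C] [Algebra F C] : IntermediateField F C :=
  adjoin F {x : C | x ^ q ∈ (algebraMap F C).range}

variable {F C : Type*} [Field F] [Field C] [Algebra F C] {q : ℕ}

theorem rootField_adjoin_eq_top {S : Set C} (hS : ∀ x ∈ S, x ^ q ∈ (algebraMap F C).range) :
    rootField q F (adjoin F S) = ⊤ := by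
  refine lift_injective _ (le_antisymm ?_ ?_) <;> rw [lift_top]
  · exact IntermediateField.lift_le _
  rw [rootField, lift_adjoin, adjoin_le_iff]
  intro x hx
  obtain ⟨a, ha⟩ := hS x hx
  exact subset_adjoin F _ ⟨⟨x, subset_adjoin F S hx⟩, ⟨a, Subtype.ext ha⟩, rfl⟩

theorem map_rootField_le {C' : Type*} [Field C'] [Algebra F C'] (f : C →ₐ[F] C') :
    (rootField q F C).map f ≤ rootField q F C' := by
  rw [rootField, adjoin_map]
  refine adjoin.mono _ _ _ ?_
  rintro _ ⟨x, ⟨a, ha⟩, rfl⟩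
  exact ⟨a, by rw [← map_pow, ← ha, f.commutes]⟩

theorem eqOn_rootField {σ τ : C ≃ₐ[F] C}
    (hστ : ∀ x, x ^ q ∈ (algebraMap F C).range → σ x = τ x) : Set.EqOn σ τ (rootField q F C) := by
  have hcomp : (σ : C →ₐ[F] C).comp (rootField q F C).val =
      (τ : C →ₐ[F] C).comp (rootField q F C).val := adjoin_algHom_ext F hστ
  exact fun x hx => DFunLike.congr_fun hcomp ⟨x, hx⟩

variable [NeZero q] {ζ : C} (hζ : IsPrimitiveRoot ζ q)
include hζ

theorem exists_apply_eq_pow_mul (σ : C ≃ₐ[F] C) {x : C} (hx : x ^ q ∈ (algebraMap F C).range) :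
    ∃ k : ℕ, σ x = ζ ^ k * x := by
  obtain rfl | hx0 := eq_or_ne x 0
  · exact ⟨0, by simp⟩
  obtain ⟨a, ha⟩ := hx
  have hroot : (σ x / x) ^ q = 1 := by
    rw [div_pow, ← map_pow, ← ha, σ.commutes, div_self (ha ▸ pow_ne_zero q hx0)]
  obtain ⟨k, -, hk⟩ := hζ.eq_pow_of_pow_eq_one hroot
  exact ⟨k, by rw [hk, div_mul_cancel₀ _ hx0]⟩

theorem eqOn_rootField_mul_mul {σ τ : C ≃ₐ[F] C} (hσ : σ ζ = ζ⁻¹) (hτ : τ ζ = ζ) :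
    Set.EqOn (τ * σ * τ) σ (rootField q F C) := by
  refine eqOn_rootField fun x hx => ?_
  obtain ⟨k, hk⟩ := exists_apply_eq_pow_mul hζ τ hx
  obtain ⟨l, hl⟩ := exists_apply_eq_pow_mul hζ σ hx
  have hζk : ζ ^ k ≠ 0 := pow_ne_zero k (hζ.ne_zero (NeZero.ne q))
  simp only [AlgEquiv.mul_apply, hk, hl, hσ, hτ, map_mul, map_pow, map_inv₀, inv_pow]
  field_simp

theorem eqOn_rootField_pow {τ : C ≃ₐ[F] C} (hτ : τ ζ = ζ) :
    Set.EqOn (τ ^ q) (1 : C ≃ₐ[F] C) (rootField q F C) := by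
  refine eqOn_rootField fun x hx => ?_
  obtain ⟨k, hk⟩ := exists_apply_eq_pow_mul hζ τ hx
  have hiter (j : ℕ) : (τ ^ j) x = ζ ^ (k * j) * x := by
    induction j with
    | zero => simp
    | succ j ih =>
      rw [pow_succ', AlgEquiv.mul_apply, ih, map_mul, map_pow, hτ, hk, ← mul_assoc, ← pow_add,
        mul_add_one]
  rw [hiter, mul_comm k, pow_mul, hζ.pow_eq_one, one_pow, one_mul, AlgEquiv.one_apply]

theorem apply_eq_self_of_mem_rootField (hq : Odd q) {σ τ : C ≃ₐ[F] C} (hσ : σ ζ = ζ⁻¹)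
    (hτ : τ ζ = ζ) {n : ℕ} [NeZero n] {ξ : C} (hξ : IsPrimitiveRoot ξ n)
    (hmem : ξ ∈ rootField q F C) : τ ξ = ξ := by
  let χ := hξ.autToPow F
  have hsq : χ τ ^ 2 = 1 := by
    have h : χ (τ * σ * τ) = χ σ :=
      (autToPow_eq_iff hξ).2 (eqOn_rootField_mul_mul hζ hσ hτ hmem)
    rw [map_mul, map_mul, mul_right_comm, mul_eq_right] at h
    rwa [sq]
  have hpow : χ τ ^ q = 1 := by
    rw [← map_pow, ← map_one χ]
    exact (autToPow_eq_iff hξ).2 (eqOn_rootField_pow hζ hτ hmem)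
  have htriv : χ τ = χ 1 := by
    rw [map_one, ← pow_one (χ τ), ← (Nat.coprime_two_left.2 hq).gcd_eq_one, pow_gcd_eq_one]
    exact ⟨hsq, hpow⟩
  exact (autToPow_eq_iff hξ).1 htriv

theorem mem_adjoin_of_mem_rootField [IsGalois F C] (hq : Odd q) {σ : C ≃ₐ[F] C} (hσ : σ ζ = ζ⁻¹)
    {n : ℕ} [NeZero n] {ξ : C} (hξ : IsPrimitiveRoot ξ n) (hmem : ξ ∈ rootField q F C) :
    ξ ∈ F⟮ζ⟯ := by
  rw [← InfiniteGalois.fixedField_fixingSubgroup F⟮ζ⟯, mem_fixedField_iff]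
  exact fun τ hτ => apply_eq_self_of_mem_rootField hζ hq hσ
    ((mem_fixingSubgroup_iff _ _).1 hτ ζ (mem_adjoin_simple_self F ζ)) hξ hmem

end RootField

section Unramified

variable (p : ℕ) [Fact p.Prime] {F : Type*} [Field F] [Algebra ℚ_[p] F] [FiniteDimensional ℚ_[p] F]

section AdjoinPrimitiveRoot

variable {C : Type*} [Field C] [Algebra F C] [Algebra ℚ_[p] C] [IsScalarTower ℚ_[p] F C]
  {m : ℕ} {ζ : C}

theorem totient_le_eAbs_adjoin (hm : m ≠ 0) (hζ : IsPrimitiveRoot ζ (p ^ m)) :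
    (p ^ m).totient ≤ eAbs p F⟮ζ⟯ := by
  have : FiniteDimensional F F⟮ζ⟯ := finiteDimensional_adjoin_primitiveRoot (NeZero.ne _) hζ
  have : FiniteDimensional ℚ_[p] F⟮ζ⟯ := .trans ℚ_[p] F F⟮ζ⟯
  have hgen : IsPrimitiveRoot (AdjoinSimple.gen F ζ) (p ^ m) :=
    hζ.of_map_of_injective (f := algebraMap F⟮ζ⟯ C) (algebraMap F⟮ζ⟯ C).injective
  exact totient_le_eAbs p hm hgen

theorem finrank_adjoin_eq_totient (hF : eAbs p F = 1) (hm : m ≠ 0)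
    (hζ : IsPrimitiveRoot ζ (p ^ m)) : Module.finrank F F⟮ζ⟯ = (p ^ m).totient := by
  have : FiniteDimensional F F⟮ζ⟯ := finiteDimensional_adjoin_primitiveRoot (NeZero.ne _) hζ
  refine le_antisymm (finrank_adjoin_le_totient (NeZero.ne _) hζ) ?_
  calc (p ^ m).totient ≤ eAbs p F⟮ζ⟯ := totient_le_eAbs_adjoin p hm hζ
    _ ≤ Module.finrank F F⟮ζ⟯ * eAbs p F := eAbs_le_finrank_mul p F F⟮ζ⟯
    _ = Module.finrank F F⟮ζ⟯ := by rw [hF, mul_one]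

theorem residueDegree_adjoin_primitiveRoot (hF : eAbs p F = 1) (hm : m ≠ 0)
    (hζ : IsPrimitiveRoot ζ (p ^ m)) : residueDegree p F⟮ζ⟯ = residueDegree p F := by
  have : FiniteDimensional F F⟮ζ⟯ := finiteDimensional_adjoin_primitiveRoot (NeZero.ne _) hζ
  rw [← eAbs_eq_finrank_mul_iff p F F⟮ζ⟯]
  refine le_antisymm (eAbs_le_finrank_mul p F F⟮ζ⟯) ?_
  rw [hF, mul_one, finrank_adjoin_eq_totient p hF hm hζ]
  exact totient_le_eAbs_adjoin p hm hζ

end AdjoinPrimitiveRoot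

theorem residueDegree_eq_of_rootField_eq_top (hp : p ≠ 2) (hF : eAbs p F = 1)
    {M : Type*} [Field M] [Algebra F M] [Algebra ℚ_[p] M] [IsScalarTower ℚ_[p] F M]
    [FiniteDimensional F M] {m : ℕ} (hm : m ≠ 0) (hM : rootField (p ^ m) F M = ⊤) :
    residueDegree p M = residueDegree p F := by
  have hpp : p.Prime := Fact.out
  have : FiniteDimensional ℚ_[p] M := .trans ℚ_[p] F M
  let C := AlgebraicClosure M
  have : CharZero F := charZero_of_injective_algebraMap (algebraMap ℚ_[p] F).injective
  have : CharZero C := charZero_of_injective_algebraMap (algebraMap F C).injective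
  have : IsAlgClosure F C := ⟨inferInstance, .trans F M C⟩
  have : IsGalois F C := IsAlgClosure.isGalois F C
  obtain ⟨ζ, hζ⟩ := HasEnoughRootsOfUnity.exists_primitiveRoot C (p ^ m)
  obtain ⟨σ, hσ⟩ := exists_algEquiv_apply_eq_inv (NeZero.ne _) hζ
    (finrank_adjoin_eq_totient p hF hm hζ)
  refine le_antisymm ?_ (residueDegree_le_of_ringHom p (algebraMap F M))
  obtain ⟨η, hη⟩ := exists_isPrimitiveRoot_residueDegree p M
  have : NeZero (p ^ residueDegree p M - 1) :=
    ⟨(Nat.sub_pos_of_lt (Nat.one_lt_pow (residueDegree_pos p M).ne' hpp.one_lt)).ne'⟩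
  have hηC := hη.map_of_injective (algebraMap M C).injective
  have hmem : algebraMap M C η ∈ rootField (p ^ m) F C :=
    map_rootField_le (IsScalarTower.toAlgHom F M C) ⟨η, hM ▸ mem_top, rfl⟩
  have hηζ : algebraMap M C η ∈ F⟮ζ⟯ :=
    mem_adjoin_of_mem_rootField hζ ((hpp.odd_of_ne_two hp).pow) hσ hηC hmem
  have : FiniteDimensional F F⟮ζ⟯ := finiteDimensional_adjoin_primitiveRoot (NeZero.ne _) hζ
  have : FiniteDimensional ℚ_[p] F⟮ζ⟯ := .trans ℚ_[p] F F⟮ζ⟯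
  rw [← residueDegree_adjoin_primitiveRoot p hF hm hζ]
  exact le_residueDegree p (ξ := (⟨_, hηζ⟩ : F⟮ζ⟯))
    (hηC.of_map_of_injective (f := algebraMap F⟮ζ⟯ C) (algebraMap F⟮ζ⟯ C).injective)

end Unramified

theorem exists_forall_pow_mem_range {p : ℕ} {F Ω : Type*} [CommRing F] [CommRing Ω] [Algebra F Ω]
    {S : Set Ω} (hfin : S.Finite) (hS : ∀ x ∈ S, ∃ k, x ^ p ^ k ∈ (algebraMap F Ω).range) :
    ∃ m ≠ 0, ∀ x ∈ S, x ^ p ^ m ∈ (algebraMap F Ω).range := by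
  have hlarge : ∀ᶠ m in Filter.atTop, ∀ x ∈ S, x ^ p ^ m ∈ (algebraMap F Ω).range := by
    rw [Filter.eventually_all_finite hfin]
    intro x hx
    obtain ⟨k, hk⟩ := hS x hx
    filter_upwards [Filter.eventually_ge_atTop k] with m hm
    rw [← Nat.add_sub_of_le hm, pow_add, pow_mul]
    exact pow_mem hk _
  exact ((Filter.eventually_ne_atTop 0).and hlarge).exists

theorem radical_extension_totally_ramified_general (p : ℕ) [Fact p.Prime] (hp : p ≠ 2)
    (F Ω : Type*) [Field F] [Field Ω]
    [Algebra ℚ_[p] F] [FiniteDimensional ℚ_[p] F]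
    (hunram : maxIdeal p F = Ideal.span {(p : ringOfInt p F)})
    [Algebra F Ω] [Algebra ℚ_[p] Ω] [IsScalarTower ℚ_[p] F Ω]
    {S : Set Ω} (hfin : S.Finite) (hS : ∀ x ∈ S, ∃ k, x ^ p ^ k ∈ (algebraMap F Ω).range) :
    eAbs p (adjoin F S) = Module.finrank F (adjoin F S) * eAbs p F := by
  obtain ⟨m, hm, hSm⟩ := exists_forall_pow_mem_range hfin hS
  have : Finite S := hfin
  have hint : ∀ x ∈ S, IsIntegral F x := fun x hx => by
    obtain ⟨a, ha⟩ := hSm x hx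
    exact .of_pow (NeZero.pos (p ^ m)) (ha ▸ isIntegral_algebraMap)
  have : FiniteDimensional F (adjoin F S) := finiteDimensional_adjoin hint
  rw [eAbs_eq_finrank_mul_iff]
  exact residueDegree_eq_of_rootField_eq_top p hp (eAbs_eq_one p hunram) hm
    (rootField_adjoin_eq_top hSm)

/-- Let `p` be an odd prime, `F/ℚ_p` a finite unramified extension, and
`a₁, ..., a_n ∈ 𝒪_F \ 𝒪_F^p` whose classes in `F*/(F*)^p` are independent.  Then for all
`r ≥ 1` and `s₁, ..., s_n ≥ 0`, the extension
`F(ζ_{p^r}, a₁^{1/p^{s₁}}, ..., a_n^{1/p^{s_n}})/F` is totally ramified. -/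
theorem radical_extension_totally_ramified (p : ℕ) [Fact p.Prime] (hp : p ≠ 2)
    (F Ω : Type*) [Field F] [Field Ω]
    [Algebra ℚ_[p] F] [FiniteDimensional ℚ_[p] F]
    (hunram : maxIdeal p F = Ideal.span {(p : ringOfInt p F)})
    [Algebra F Ω] [Algebra ℚ_[p] Ω] [IsScalarTower ℚ_[p] F Ω]
    (n : ℕ) (a : Fin n → F)
    (haO : ∀ i, a i ∈ ringOfInt p F)
    (haP : ∀ i, ¬∃ b ∈ ringOfInt p F, b ^ p = a i)
    (hind : ∀ i : Fin n, 0 < (i : ℕ) →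
      ¬∃ (c : F) (x : Fin n → ℤ),
        a i = c ^ p * ∏ j ∈ Finset.univ.filter (fun j => j < i), a j ^ x j) :
    ∀ (r : ℕ), 1 ≤ r → ∀ (s : Fin n → ℕ) (ζ : Ω), IsPrimitiveRoot ζ (p ^ r) →
      ∀ α : Fin n → Ω, (∀ i, α i ^ (p ^ s i) = algebraMap F Ω (a i)) →
        eAbs p ↥(IntermediateField.adjoin F ({ζ} ∪ Set.range α)) =
          Module.finrank F ↥(IntermediateField.adjoin F ({ζ} ∪ Set.range α)) * eAbs p F := by
  intro r _ s ζ hζ α hα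
  refine radical_extension_totally_ramified_general p hp F Ω hunram
    ((Set.finite_singleton ζ).union (Set.finite_range α)) ?_
  rintro x (rfl | ⟨i, rfl⟩)
  · exact ⟨r, hζ.pow_eq_one ▸ one_mem _⟩
  · exact ⟨s i, a i, (hα i).symm⟩
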